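/- For every closed term M of Λ⊕, ⟦M⟧div + Σ⟦M⟧v = 1, where ⟦M⟧div = sup{p | M ⇓div p}: the divergence probability and the total convergence probability of M sum to exactly 1. -/

import Mathlib

open scoped ENNReal

/-- Terms of Λ⊕ (and of Λ⊕⁺), in de Bruijn notation: variables, abstractions,
applications and binary (probabilistic) sums.  De Bruijn indices realize
"terms up to renaming of bound variables". -/
inductive Term : Type
  | var : ℕ → Term
  | lam : Term → Term
  | app : Term → Term → Term
  | choice : Term → Term → Term
  deriving DecidableEq

namespace Term

/-- Values: variables and abstractions. -/
inductive IsValue : Term → Prop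
  | var (n : ℕ) : IsValue (var n)
  | lam (M : Term) : IsValue (lam M)

/-- Boolean value test. -/
def isVal : Term → Bool
  | var _ => true
  | lam _ => true
  | _ => false

/-- Shifting of de Bruijn indices: add `d` to all indices `≥ c`. -/
def shift (d c : ℕ) : Term → Term
  | var n => if n < c then var n else var (n + d)
  | lam M => lam (shift d (c + 1) M)
  | app M N => app (shift d c M) (shift d c N)
  | choice M N => choice (shift d c M) (shift d c N)

/-- Capture-avoiding substitution `M[j := N]` (the variable `j` is consumed and
higher indices are decremented, as in a β-step). -/
def subst : Term → ℕ → Term → Term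
  | var n, j, N => if n = j then shift j 0 N else if j < n then var (n - 1) else var n
  | lam M, j, N => lam (subst M (j + 1) N)
  | app M L, j, N => app (subst M j N) (subst L j N)
  | choice M L, j, N => choice (subst M j N) (subst L j N)

/-- All free indices are `< n`. -/
def closedUnder : Term → ℕ → Prop
  | var m, n => m < n
  | lam M, n => closedUnder M (n + 1)
  | app M N, n => closedUnder M n ∧ closedUnder N n
  | choice M N, n => closedUnder M n ∧ closedUnder N n

/-- Closed terms: no free variables. -/
def Closed (M : Term) : Prop := closedUnder M 0

end Term

/-- (Sub)distributions are represented as functions from terms into `ℝ≥0∞`;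
genuine distributions (`IsDist`) are supported on values and have mass `≤ 1`. -/
abbrev PDist := Term → ℝ≥0∞

/-- The sum (total mass) `Σ𝒟` of a distribution. -/
noncomputable def dsum (D : PDist) : ℝ≥0∞ := ∑' M, D M

/-- The support of a distribution. -/
def dsupp (D : PDist) : Set Term := {M | D M ≠ 0}

/-- The everywhere-zero distribution `∅`. -/
noncomputable def dzero : PDist := fun _ => 0

/-- The Dirac distribution `{V^1}`. -/
noncomputable def dirac (V : Term) : PDist := fun M => if M = V then 1 else 0

/-- Being a genuine (sub)probability distribution: supported on values, with
total mass at most one. -/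
def IsDist (D : PDist) : Prop := (∀ M, D M ≠ 0 → M.IsValue) ∧ dsum D ≤ 1

/-- Call-by-value reduction `↦v`, relating a term to the (equiprobable) finite
sequence of its possible reducts. -/
inductive RedV : Term → List Term → Prop
  | beta {M V : Term} : V.IsValue → RedV (.app (.lam M) V) [M.subst 0 V]
  | choice {V W : Term} : V.IsValue → W.IsValue → RedV (.choice V W) [V, W]
  | appL {M N : Term} {Ls : List Term} :
      RedV M Ls → RedV (.app M N) (Ls.map (fun L => .app L N))
  | appR {V M : Term} {Ns : List Term} :
      V.IsValue → RedV M Ns → RedV (.app V M) (Ns.map (fun L => .app V L))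
  | choiceL {M N : Term} {Ls : List Term} :
      RedV M Ls → RedV (.choice M N) (Ls.map (fun L => .choice L N))
  | choiceR {V M : Term} {Ns : List Term} :
      V.IsValue → RedV M Ns → RedV (.choice V M) (Ns.map (fun L => .choice V L))

/-- Call-by-name reduction `↦n`. -/
inductive RedN : Term → List Term → Prop
  | beta {M N : Term} : RedN (.app (.lam M) N) [M.subst 0 N]
  | choice {M N : Term} : RedN (.choice M N) [M, N]
  | appL {M N : Term} {Ls : List Term} :
      RedN M Ls → RedN (.app M N) (Ls.map (fun L => .app L N))

/-- The inductive small-step convergence relation `⇒`, parametric in the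
underlying reduction relation: any term evaluates to `∅`; a value `V`
evaluates to `{V^1}`; and if `M ↦ N₁,…,Nₙ` and `Nᵢ ⇒ 𝒟ᵢ` then
`M ⇒ Σᵢ (1/n)𝒟ᵢ`. -/
inductive Conv (Red : Term → List Term → Prop) : Term → PDist → Prop
  | bot (M : Term) : Conv Red M dzero
  | val {V : Term} : V.IsValue → Conv Red V (dirac V)
  | step {M : Term} {Ns : List Term} (Ds : Fin Ns.length → PDist) :
      Red M Ns → (∀ i, Conv Red (Ns.get i) (Ds i)) →
      Conv Red M (fun W => (∑ i, Ds i W) / (Ns.length : ℝ≥0∞))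

/-- Call-by-value small-step convergence `⇒v`. -/
def SmallV : Term → PDist → Prop := Conv RedV

/-- Call-by-name small-step convergence `⇒n`. -/
def SmallN : Term → PDist → Prop := Conv RedN

/-- The small-step semantics `⟦M⟧`: the pointwise supremum of all distributions
derivable for `M`. -/
noncomputable def semOf (S : Term → PDist → Prop) (M : Term) : PDist :=
  fun W => ⨆ (D : PDist) (_ : S M D), D W

/-- Call-by-value small-step semantics `⟦M⟧v`. -/
noncomputable def semV : Term → PDist := semOf SmallV

/-- Call-by-name small-step semantics `⟦M⟧n`. -/
noncomputable def semN : Term → PDist := semOf SmallN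

/-- One-step unfolding of the divergence inference system: a value diverges
with probability `0`; if `M ↦ N₁,…,Nₙ` and `Nᵢ` diverges with probability
`pᵢ`, then `M` diverges with probability `Σᵢ (1/n)pᵢ`. -/
def DivStep (Red : Term → List Term → Prop) (R : Term → ℝ≥0∞ → Prop)
    (M : Term) (p : ℝ≥0∞) : Prop :=
  (M.IsValue ∧ p = 0) ∨
    ∃ (Ns : List Term) (ps : Fin Ns.length → ℝ≥0∞),
      Red M Ns ∧ (∀ i, R (Ns.get i) (ps i)) ∧ p = (∑ i, ps i) / (Ns.length : ℝ≥0∞)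

/-- The coinductively-defined divergence relation `⇓div`: the union of all
consistent relations between terms and probabilities in `[0,1]`. -/
def Diverges (Red : Term → List Term → Prop) (M : Term) (p : ℝ≥0∞) : Prop :=
  ∃ R : Term → ℝ≥0∞ → Prop,
    (∀ N q, R N q → q ≤ 1 ∧ DivStep Red R N q) ∧ R M p

/-- Call-by-value divergence `⇓div`. -/
def DivV : Term → ℝ≥0∞ → Prop := Diverges RedV

/-- Call-by-name divergence `⇓div,n`. -/
def DivN : Term → ℝ≥0∞ → Prop := Diverges RedN

/-- One-step unfolding of the call-by-value big-step inference system. -/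
def BigVStep (R : Term → PDist → Prop) (M : Term) (D : PDist) : Prop :=
  (M.IsValue ∧ D = dirac M) ∨
  (∃ (N L : Term) (E F : PDist) (G : Term → Term → PDist),
      M = .app N L ∧ R N E ∧ R L F ∧
      (∀ P V, E (.lam P) ≠ 0 → V.IsValue → F V ≠ 0 → R (P.subst 0 V) (G P V)) ∧
      D = fun W => ∑' (P : Term), ∑' (V : Term), E (.lam P) * F V * G P V W) ∨
  (∃ (N L : Term) (E F : PDist),
      M = .choice N L ∧ R N E ∧ R L F ∧
      D = fun W => (E W * dsum F + F W * dsum E) / 2)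

/-- The coinductive call-by-value big-step relation `⇓v`: the union of all
consistent relations between terms and distributions. -/
def BigV (M : Term) (D : PDist) : Prop :=
  ∃ R : Term → PDist → Prop,
    (∀ N E, R N E → IsDist E ∧ BigVStep R N E) ∧ R M D

/-- One-step unfolding of the call-by-name big-step inference system. -/
def BigNStep (R : Term → PDist → Prop) (M : Term) (D : PDist) : Prop :=
  (M.IsValue ∧ D = dirac M) ∨
  (∃ (N L : Term) (E : PDist) (F : Term → PDist),
      M = .app N L ∧ R N E ∧
      (∀ P, E (.lam P) ≠ 0 → R (P.subst 0 L) (F P)) ∧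
      D = fun W => ∑' (P : Term), E (.lam P) * F P W) ∨
  (∃ (N L : Term) (E F : PDist),
      M = .choice N L ∧ R N E ∧ R L F ∧ D = fun W => (E W + F W) / 2)

/-- The coinductive call-by-name big-step relation `⇓n`. -/
def BigN (M : Term) (D : PDist) : Prop :=
  ∃ R : Term → PDist → Prop,
    (∀ N E, R N E → IsDist E ∧ BigNStep R N E) ∧ R M D

/-- Big-step semantics `⟪M⟫`: the pointwise infimum of all distributions
derivable for `M` in a big-step system. -/
noncomputable def bigSemOf (B : Term → PDist → Prop) (M : Term) : PDist :=
  fun W => ⨅ (D : PDist) (_ : B M D), D W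

/-!
A derivable finite approximation `D` of `⟦M⟧` records the mass that has reached a value after
finitely many steps, and a divergence probability only counts mass that has not, so `p + Σ D ≤ 1`.
Determinism makes the approximations of `M` directed, which lets the total mass pass to their
supremum `⟦M⟧`. Conversely, reduction preserves total mass on average, so the relation
`q = 1 - Σ ⟦N⟧` on terms that never get stuck is consistent with the divergence rules, and
coinduction makes `1 - Σ ⟦M⟧` a divergence probability of `M`.
-/

theorem sum_div_le_of_forall_le {n : ℕ} {f : Fin n → ℝ≥0∞} {c : ℝ≥0∞} (hf : ∀ i, f i ≤ c) :
    (∑ i, f i) / n ≤ c := by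
  refine ENNReal.div_le_of_le_mul' ?_
  simpa using Finset.sum_le_card_nsmul Finset.univ f c fun i _ => hf i

theorem sum_div_le_sum_div {ι : Type*} [Fintype ι] {f g : ι → ℝ≥0∞} {c : ℝ≥0∞}
    (hfg : ∀ i, f i ≤ g i) : (∑ i, f i) / c ≤ (∑ i, g i) / c :=
  ENNReal.div_le_div_right (Finset.sum_le_sum fun i _ => hfg i) _

theorem sum_one_sub_div {n : ℕ} (hn : n ≠ 0) {f : Fin n → ℝ≥0∞} (hf : ∀ i, f i ≤ 1) :
    (∑ i, (1 - f i)) / n = 1 - (∑ i, f i) / n := by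
  have avg_ne_top : (∑ i, f i) / n ≠ ∞ :=
    ne_top_of_le_ne_top ENNReal.one_ne_top (sum_div_le_of_forall_le hf)
  refine ENNReal.eq_sub_of_add_eq avg_ne_top ?_
  calc (∑ i, (1 - f i)) / n + (∑ i, f i) / n
      = (∑ i, (1 - f i + f i)) / n := by rw [← ENNReal.add_div, ← Finset.sum_add_distrib]
    _ = (n : ℝ≥0∞) / n := by simp [tsub_add_cancel_of_le (hf _)]
    _ = 1 := ENNReal.div_self (Nat.cast_ne_zero.2 hn) (ENNReal.natCast_ne_top n)

theorem sum_iSup_eq_iSup_pi_sum {ι : Type*} [Fintype ι] {κ : ι → Type*} [∀ i, Nonempty (κ i)]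
    (f : ∀ i, κ i → ℝ≥0∞) :
    ∑ i, ⨆ k, f i k = ⨆ k : ∀ i, κ i, ∑ i, f i (k i) := by
  have exists_ge (k l : ∀ i, κ i) :
      ∃ m : ∀ i, κ i, ∀ i, f i (k i) ≤ f i (m i) ∧ f i (l i) ≤ f i (m i) := by
    choose m hkm hlm using fun i => Std.Total.directed (r := (· ≤ ·)) (f i) (k i) (l i)
    exact ⟨m, fun i => ⟨hkm i, hlm i⟩⟩
  calc ∑ i, ⨆ k, f i k = ∑ i, ⨆ k : ∀ i, κ i, f i (k i) :=
        Finset.sum_congr rfl fun i _ => ((Function.surjective_eval i).iSup_comp (f i)).symm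
    _ = ⨆ k : ∀ i, κ i, ∑ i, f i (k i) := ENNReal.finsetSum_iSup exists_ge

theorem tsum_iSup_of_directed {ι α : Type*} {f : ι → α → ℝ≥0∞} (hf : Directed (· ≤ ·) f) :
    ∑' a, ⨆ i, f i a = ⨆ i, ∑' a, f i a := by
  have exists_ge (i j : ι) : ∃ k, ∀ a, f i a ≤ f k a ∧ f j a ≤ f k a :=
    (hf i j).imp fun _ h a => ⟨h.1 a, h.2 a⟩
  simp only [ENNReal.tsum_eq_iSup_sum, ENNReal.finsetSum_iSup exists_ge]
  exact iSup_comm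

theorem dsum_dzero : dsum dzero = 0 :=
  ENNReal.tsum_eq_zero.2 fun _ => rfl

theorem dsum_dirac (V : Term) : dsum (dirac V) = 1 :=
  tsum_ite_eq V _

theorem dsum_sum_div {ι : Type*} [Fintype ι] (D : ι → PDist) (c : ℝ≥0∞) :
    dsum (fun W => (∑ i, D i W) / c) = (∑ i, dsum (D i)) / c := by
  simp only [dsum, div_eq_mul_inv]
  rw [ENNReal.tsum_mul_right, Summable.tsum_finsetSum fun _ _ => ENNReal.summable]

/-- A reduction relation under which values are irreducible and every other term has at most one
sequence of reducts. Randomness lies only in the choice of an entry of that sequence. -/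
structure IsDeterministic (Red : Term → List Term → Prop) : Prop where
  not_isValue {M : Term} {Ns : List Term} : Red M Ns → ¬M.IsValue
  unique {M : Term} {Ns Ns' : List Term} : Red M Ns → Red M Ns' → Ns = Ns'

/-- A set of terms enjoying progress and preservation, so that reduction from it never gets stuck.
The reduct sequence must be nonempty, since the average of an empty one would be `0 / 0 = 0`. -/
def IsSafe (Red : Term → List Term → Prop) (S : Set Term) : Prop :=
  ∀ M ∈ S, M.IsValue ∨ ∃ Ns, Red M Ns ∧ Ns ≠ [] ∧ ∀ N ∈ Ns, N ∈ S

section SmallStep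

variable {Red : Term → List Term → Prop} {M : Term} {Ns : List Term} {D : PDist} {p : ℝ≥0∞}

theorem Conv.dsum_le_one (h : Conv Red M D) : dsum D ≤ 1 := by
  induction h with
  | bot => exact dsum_dzero.trans_le zero_le
  | val => exact (dsum_dirac _).le
  | step Ds _ _ ih => exact (dsum_sum_div Ds _).trans_le (sum_div_le_of_forall_le ih)

theorem Conv.exists_ge (hRed : IsDeterministic Red) {E : PDist} (hD : Conv Red M D)
    (hE : Conv Red M E) : ∃ F, Conv Red M F ∧ D ≤ F ∧ E ≤ F := by
  induction hD generalizing E with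
  | bot => exact ⟨E, hE, fun _ => zero_le, le_rfl⟩
  | val hV =>
    cases hE with
    | bot => exact ⟨_, .val hV, le_rfl, fun _ => zero_le⟩
    | val => exact ⟨_, .val hV, le_rfl, le_rfl⟩
    | step _ hM => exact absurd hV (hRed.not_isValue hM)
  | step Ds hM hDs ih =>
    cases hE with
    | bot => exact ⟨_, .step Ds hM hDs, le_rfl, fun _ => zero_le⟩
    | val hV => exact absurd hV (hRed.not_isValue hM)
    | step Es hM' hEs =>
      obtain rfl := hRed.unique hM hM'
      choose Fs hFs hDF hEF using fun i => ih i (hEs i)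
      exact ⟨_, .step Fs hM hFs, fun W => sum_div_le_sum_div fun i => hDF i W,
        fun W => sum_div_le_sum_div fun i => hEF i W⟩

theorem semOf_apply (S : Term → PDist → Prop) (M W : Term) :
    semOf S M W = ⨆ D : {D // S M D}, D.1 W :=
  iSup_subtype'

theorem Conv.le_semOf (h : Conv Red M D) : D ≤ semOf (Conv Red) M :=
  fun W => le_iSup₂ (f := fun (D : PDist) (_ : Conv Red M D) => D W) D h

theorem semOf_of_isValue (hRed : IsDeterministic Red) (hM : M.IsValue) :
    semOf (Conv Red) M = dirac M := by
  refine le_antisymm (fun W => iSup₂_le fun D hD => ?_) (Conv.val hM).le_semOf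
  cases hD with
  | bot => exact zero_le
  | val => exact le_rfl
  | step _ hM' => exact absurd hM (hRed.not_isValue hM')

theorem semOf_of_red (hRed : IsDeterministic Red) (hM : Red M Ns) :
    semOf (Conv Red) M =
      fun W => (∑ i : Fin Ns.length, semOf (Conv Red) (Ns.get i) W) / (Ns.length : ℝ≥0∞) := by
  refine le_antisymm (fun W => iSup₂_le fun D hD => ?_) fun W => ?_
  · cases hD with
    | bot => exact zero_le
    | val hV => exact absurd hV (hRed.not_isValue hM)
    | step Ds hM' hDs =>
      obtain rfl := hRed.unique hM hM'
      exact sum_div_le_sum_div fun i => (hDs i).le_semOf W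
  · have (i : Fin Ns.length) : Nonempty {D // Conv Red (Ns.get i) D} := ⟨⟨dzero, .bot _⟩⟩
    simp only [semOf_apply _ (Ns.get _), sum_iSup_eq_iSup_pi_sum, ENNReal.iSup_div]
    exact iSup_le fun Ds => (Conv.step (fun i => (Ds i).1) hM fun i => (Ds i).2).le_semOf W

theorem dsum_semOf (hRed : IsDeterministic Red) (M : Term) :
    dsum (semOf (Conv Red) M) = ⨆ D : {D // Conv Red M D}, dsum D.1 := by
  have directed : Directed (· ≤ ·) fun D : {D // Conv Red M D} => D.1 := fun D E =>
    let ⟨F, hF, hDF, hEF⟩ := D.2.exists_ge hRed E.2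
    ⟨⟨F, hF⟩, hDF, hEF⟩
  simp only [dsum, semOf_apply, tsum_iSup_of_directed directed]

theorem dsum_semOf_le_one (hRed : IsDeterministic Red) (M : Term) :
    dsum (semOf (Conv Red) M) ≤ 1 :=
  (dsum_semOf hRed M).trans_le (iSup_le fun D => D.2.dsum_le_one)

theorem Diverges.le_one (h : Diverges Red M p) : p ≤ 1 :=
  let ⟨_, hR, hM⟩ := h
  (hR M p hM).1

theorem Diverges.divStep (h : Diverges Red M p) : DivStep Red (Diverges Red) M p := by
  obtain ⟨R, hR, hM⟩ := h
  exact (hR M p hM).2.imp_right fun ⟨Ns, ps, hNs, hps, hp⟩ =>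
    ⟨Ns, ps, hNs, fun i => ⟨R, hR, hps i⟩, hp⟩

theorem Diverges.add_dsum_le_one (hRed : IsDeterministic Red) (hp : Diverges Red M p)
    (hD : Conv Red M D) : p + dsum D ≤ 1 := by
  induction hD generalizing p with
  | bot => rw [dsum_dzero, add_zero]; exact hp.le_one
  | val hV =>
    obtain ⟨_, rfl⟩ | ⟨_, _, hM, _⟩ := hp.divStep
    · rw [dsum_dirac, zero_add]
    · exact absurd hV (hRed.not_isValue hM)
  | step Ds hM _ ih =>
    obtain ⟨hV, _⟩ | ⟨_, ps, hM', hps, rfl⟩ := hp.divStep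
    · exact absurd hV (hRed.not_isValue hM)
    · obtain rfl := hRed.unique hM hM'
      rw [dsum_sum_div, ← ENNReal.add_div, ← Finset.sum_add_distrib]
      exact sum_div_le_of_forall_le fun i => ih i (hps i)

theorem Diverges.add_dsum_semOf_le_one (hRed : IsDeterministic Red) (hp : Diverges Red M p) :
    p + dsum (semOf (Conv Red) M) ≤ 1 := by
  have : Nonempty {D // Conv Red M D} := ⟨⟨dzero, .bot M⟩⟩
  rw [dsum_semOf hRed, ENNReal.add_iSup]
  exact iSup_le fun D => hp.add_dsum_le_one hRed D.2

theorem divStep_one_sub_dsum_semOf (hRed : IsDeterministic Red) {S : Set Term}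
    (hS : IsSafe Red S) (hM : M ∈ S) :
    DivStep Red (fun N q => N ∈ S ∧ q = 1 - dsum (semOf (Conv Red) N)) M
      (1 - dsum (semOf (Conv Red) M)) := by
  obtain hV | ⟨Ns, hMNs, hne, hNs⟩ := hS M hM
  · exact .inl ⟨hV, by rw [semOf_of_isValue hRed hV, dsum_dirac, tsub_self]⟩
  · refine .inr ⟨Ns, _, hMNs, fun i => ⟨hNs _ (Ns.get_mem i), rfl⟩, ?_⟩
    rw [semOf_of_red hRed hMNs, dsum_sum_div]
    exact (sum_one_sub_div (mt List.eq_nil_of_length_eq_zero hne) fun i =>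
      dsum_semOf_le_one hRed (Ns.get i)).symm

theorem diverges_one_sub_dsum_semOf (hRed : IsDeterministic Red) {S : Set Term}
    (hS : IsSafe Red S) (hM : M ∈ S) : Diverges Red M (1 - dsum (semOf (Conv Red) M)) := by
  refine ⟨fun N q => N ∈ S ∧ q = 1 - dsum (semOf (Conv Red) N), ?_, hM, rfl⟩
  rintro N _ ⟨hN, rfl⟩
  exact ⟨tsub_le_self, divStep_one_sub_dsum_semOf hRed hS hN⟩

theorem isGreatest_diverges (hRed : IsDeterministic Red) {S : Set Term} (hS : IsSafe Red S)
    (hM : M ∈ S) : IsGreatest {p | Diverges Red M p} (1 - dsum (semOf (Conv Red) M)) := by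
  refine ⟨diverges_one_sub_dsum_semOf hRed hS hM, fun p hp => ?_⟩
  have mass_ne_top : dsum (semOf (Conv Red) M) ≠ ∞ :=
    ne_top_of_le_ne_top ENNReal.one_ne_top (dsum_semOf_le_one hRed M)
  exact ENNReal.le_sub_of_add_le_right mass_ne_top (hp.add_dsum_semOf_le_one hRed)

theorem divSemV_add_semV_mass_general (hRed : IsDeterministic Red) {S : Set Term}
    (hS : IsSafe Red S) (hM : M ∈ S) :
    (⨆ (p : ℝ≥0∞) (_ : Diverges Red M p), p) + dsum (semOf (Conv Red) M) = 1 :=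
  calc (⨆ (p : ℝ≥0∞) (_ : Diverges Red M p), p) + dsum (semOf (Conv Red) M)
      = sSup {p | Diverges Red M p} + dsum (semOf (Conv Red) M) := by
        rw [sSup_eq_iSup]; rfl
    _ = 1 - dsum (semOf (Conv Red) M) + dsum (semOf (Conv Red) M) := by
        rw [(isGreatest_diverges hRed hS hM).csSup_eq]
    _ = 1 := tsub_add_cancel_of_le (dsum_semOf_le_one hRed M)

end SmallStep

namespace Term

theorem closedUnder.shift {M : Term} {n : ℕ} (d c : ℕ) (hM : M.closedUnder n) :
    (M.shift d c).closedUnder (n + d) := by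
  induction M generalizing n c with
  | var k =>
    simp only [closedUnder] at hM
    simp only [Term.shift]
    split_ifs <;> simp only [closedUnder] <;> omega
  | lam M ih => simpa only [Term.shift, closedUnder, Nat.add_right_comm] using ih (c + 1) hM
  | app M N ihM ihN | choice M N ihM ihN => exact ⟨ihM c hM.1, ihN c hM.2⟩

theorem closedUnder.subst {M N : Term} {n j : ℕ} (hM : M.closedUnder (n + j + 1))
    (hN : N.closedUnder n) : (M.subst j N).closedUnder (n + j) := by
  induction M generalizing j with
  | var k =>
    simp only [closedUnder] at hM
    simp only [Term.subst]
    split_ifs with _ _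
    · exact hN.shift j 0
    all_goals simp only [closedUnder]; omega
  | lam M ih => exact ih (j := j + 1) hM
  | app M L ihM ihL | choice M L ihM ihL => exact ⟨ihM hM.1, ihL hM.2⟩

end Term

namespace RedV

variable {M : Term} {Ns : List Term}

theorem not_isValue (h : RedV M Ns) : ¬M.IsValue := by
  cases h <;> rintro ⟨⟩

theorem ne_nil (h : RedV M Ns) : Ns ≠ [] := by
  induction h <;> simp_all

theorem unique {Ns' : List Term} (h : RedV M Ns) (h' : RedV M Ns') : Ns = Ns' := by
  -- Two different rules apply to the same term only if some value reduces.
  induction h generalizing Ns' <;> cases h' <;> grind [not_isValue, Term.IsValue.lam]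

theorem isDeterministic : IsDeterministic RedV where
  not_isValue := not_isValue
  unique := unique

theorem closed (h : RedV M Ns) (hM : M.Closed) : ∀ N ∈ Ns, N.Closed := by
  induction h with
  | beta =>
    rw [List.forall_mem_singleton]
    exact Term.closedUnder.subst hM.1 hM.2
  | choice => simpa [Term.Closed, Term.closedUnder] using hM
  | appL _ ih | choiceL _ ih =>
    exact List.forall_mem_map.2 fun L hL => ⟨ih hM.1 L hL, hM.2⟩
  | appR _ _ ih | choiceR _ _ ih =>
    exact List.forall_mem_map.2 fun L hL => ⟨hM.1, ih hM.2 L hL⟩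

end RedV

theorem Term.Closed.isValue_or_exists_redV {M : Term} (hM : M.Closed) :
    M.IsValue ∨ ∃ Ns, RedV M Ns := by
  induction M with
  | var k => exact .inl (.var k)
  | lam M => exact .inl (.lam M)
  | app M N ihM ihN =>
    right
    obtain hMV | ⟨Ls, hL⟩ := ihM hM.1
    · obtain hNV | ⟨Ls, hL⟩ := ihN hM.2
      · cases hMV with
        | var n => exact absurd hM.1 n.not_lt_zero
        | lam P => exact ⟨_, .beta hNV⟩
      · exact ⟨_, .appR hMV hL⟩
    · exact ⟨_, .appL hL⟩
  | choice M N ihM ihN =>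
    right
    obtain hMV | ⟨Ls, hL⟩ := ihM hM.1
    · obtain hNV | ⟨Ls, hL⟩ := ihN hM.2
      · exact ⟨_, .choice hMV hNV⟩
      · exact ⟨_, .choiceR hMV hL⟩
    · exact ⟨_, .choiceL hL⟩

theorem isSafe_redV_closed : IsSafe RedV {M | M.Closed} := fun _ hM =>
  hM.isValue_or_exists_redV.imp_right fun ⟨Ns, h⟩ => ⟨Ns, h, h.ne_nil, h.closed hM⟩

/-- the divergence probability and the total convergence
probability of `M` sum to exactly `1`. -/
theorem divSemV_add_semV_mass (M : Term) (hM : M.Closed) :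
    (⨆ (p : ℝ≥0∞) (_ : DivV M p), p) + dsum (semV M) = 1 :=
  divSemV_add_semV_mass_general RedV.isDeterministic isSafe_redV_closed hM
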